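/- arXiv:1803.08556 — 2 statements merged into one kernel-verified Lean document; each statement's English description precedes it below -/
import Mathlib

section
/- Let C ⊆ [0,1] be the middle-thirds Cantor set and, for k ≥ 1, let 𝒞_k be the set of connected components of [0,1] \ C that are open intervals of length 3^{−k}. Let K_odd = ⋃_{k odd} ⋃ 𝒞_k and K_even = ⋃_{k even} ⋃ 𝒞_k, and define K = (C × [0,1]) ∪ (K_even × {0}) ∪ (K_odd × {1}) ⊆ [0,1]². Then the path-component space π₀(K) is homeomorphic to [0,1], and the natural quotient map q_K : K → π₀(K) is a perfect map. -/
/-!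
The Cantor function, composed with the first projection, gives a continuous surjection
`heightMap : K → [0,1]`. Its fibers are exactly the path components of `K`, so it
induces a continuous bijection `π₀(K) → [0,1]`. As `K` is compact (`isCompact_spaceK`) and `[0,1]`
is Hausdorff, this bijection is a homeomorphism, and `q_K` is a continuous map from a compact space
to a Hausdorff space, hence closed with compact fibers.

Fibers are path connected (`joined_of_heightMap_eq`): points of the Cantor set with equal image under
the Cantor function are equal or are `w0222…` and `w2000…` in ternary notation, the endpoints of one
removed interval, and the two vertical segments above them are bridged by a horizontal segment.

Paths stay in one fiber (`heightMap_eq_of_joined`): near each time the second coordinate of a path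
varies by less than `1`. If the Cantor function were not constant along that short piece, the piece
would cross removed intervals of both parities (`exists_gap_between`), and so would attain both
heights `0` and `1`. Hence the Cantor function is locally constant along the path.
-/

/-- The path-component space `π₀(X)`: the quotient of `X` by the relation of being
joined by a path, equipped with the quotient topology. -/
instance pi0TopologicalSpace (X : Type*) [TopologicalSpace X] :
    TopologicalSpace (ZerothHomotopy X) :=
  instTopologicalSpaceQuotient

/-- The natural quotient map `q_X : X → π₀(X)`. -/
def pi0Mk {X : Type*} [TopologicalSpace X] (x : X) : ZerothHomotopy X :=
  Quotient.mk (pathSetoid X) x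

/-- The middle-thirds Cantor set `C = {∑ xᵢ/3ⁱ : xᵢ ∈ {0,2}}`. -/
def cantorC : Set ℝ :=
  {x | ∃ a : ℕ → ℝ, (∀ i, a i = 0 ∨ a i = 2) ∧ x = ∑' i, a i / 3 ^ (i + 1)}

/-- The connected components of `[0,1] \ C`. -/
def removedComponents : Set (Set ℝ) :=
  {S | ∃ x ∈ Set.Icc (0 : ℝ) 1 \ cantorC,
    S = connectedComponentIn (Set.Icc (0 : ℝ) 1 \ cantorC) x}

/-- `𝒞ₖ`: those components of `[0,1] \ C` which are open intervals of length `3⁻ᵏ`. -/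
def cantorCk (k : ℕ) : Set (Set ℝ) :=
  {S | S ∈ removedComponents ∧ ∃ a b : ℝ, S = Set.Ioo a b ∧ b - a = (1 : ℝ) / 3 ^ k}

/-- `K_odd`: the union of the components of odd index `k ≥ 1`. -/
def cantorKodd : Set ℝ := ⋃ k ∈ {k : ℕ | 1 ≤ k ∧ Odd k}, ⋃ S ∈ cantorCk k, S

/-- `K_even`: the union of the components of even index `k ≥ 1`. -/
def cantorKeven : Set ℝ := ⋃ k ∈ {k : ℕ | 1 ≤ k ∧ Even k}, ⋃ S ∈ cantorCk k, S

/-- `K = (C × [0,1]) ∪ (K_even × {0}) ∪ (K_odd × {1}) ⊆ [0,1]²`. -/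
def spaceK : Set (ℝ × ℝ) :=
  (cantorC ×ˢ Set.Icc (0 : ℝ) 1) ∪ (cantorKeven ×ˢ {0}) ∪ (cantorKodd ×ˢ {1})

open Set Real

/-! ### Digit expansions -/

/-- The real number whose `i`-th digit in base `b + 1` is `b` when `s i` holds and `0` otherwise.
Thus `digitVal 2` parametrizes the Cantor set by ternary digits `0, 2`, and `digitVal 1` is the
usual binary expansion map onto `[0,1]`. -/
noncomputable def digitVal (b : ℕ) (s : ℕ → Bool) : ℝ :=
  ofDigits (b := b + 1) (fun i => if s i then Fin.last b else 0)

/-- The sequence agreeing with `s` below `n`, followed by `0111…`. For `digitVal 2` this is the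
left endpoint of a removed interval. -/
def gapLo (s : ℕ → Bool) (n : ℕ) : ℕ → Bool :=
  fun i => if i < n then s i else if i = n then false else true

/-- The sequence agreeing with `s` below `n`, followed by `1000…`. For `digitVal 2` this is the
right endpoint of a removed interval. -/
def gapHi (s : ℕ → Bool) (n : ℕ) : ℕ → Bool :=
  fun i => if i < n then s i else if i = n then true else false

/-- `s` precedes `s'` lexicographically, `n` being the first index where they differ. -/
def LexAt (s s' : ℕ → Bool) (n : ℕ) : Prop :=
  (∀ i < n, s i = s' i) ∧ s n = false ∧ s' n = true

lemma lexAt_trichotomy (s s' : ℕ → Bool) :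
    s = s' ∨ (∃ n, LexAt s s' n) ∨ (∃ n, LexAt s' s n) := by
  classical
  by_cases h : ∃ n, s n ≠ s' n
  · have h1 := Nat.find_spec h
    have h2 : ∀ i < Nat.find h, s i = s' i := fun i hi => by
      simpa using Nat.find_min h hi
    right
    cases hs : s (Nat.find h) <;> cases hs' : s' (Nat.find h)
    · simp [hs, hs'] at h1
    · exact Or.inl ⟨_, h2, hs, hs'⟩
    · exact Or.inr ⟨_, fun i hi => (h2 i hi).symm, hs', hs⟩
    · simp [hs, hs'] at h1
  · left
    push Not at h
    exact funext h

lemma digitVal_mem (b : ℕ) (s : ℕ → Bool) : digitVal b s ∈ Icc (0 : ℝ) 1 :=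
  ⟨ofDigits_nonneg _, ofDigits_le_one _⟩

lemma digitVal_mono (b : ℕ) : Monotone (digitVal b) := by
  intro s s' h
  refine Summable.tsum_le_tsum (fun i => ?_) summable_ofDigitsTerm summable_ofDigitsTerm
  unfold ofDigitsTerm
  gcongr
  have := h i
  cases hs : s i <;> cases hs' : s' i <;> simp_all [Bool.le_iff_imp]

lemma digitVal_strictMono {b : ℕ} (hb : 0 < b) : StrictMono (digitVal b) := by
  intro s s' h
  obtain ⟨hle, i, hi⟩ := Pi.lt_def.1 h
  refine Summable.tsum_lt_tsum (i := i) (fun i => ?_) ?_ summable_ofDigitsTerm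
    summable_ofDigitsTerm
  · unfold ofDigitsTerm
    gcongr
    have := hle i
    cases hs : s i <;> cases hs' : s' i <;> simp_all [Bool.le_iff_imp]
  · unfold ofDigitsTerm
    gcongr
    have := Bool.lt_iff.1 hi
    simp_all

lemma digitVal_true (b : ℕ) : digitVal (b + 1) (fun _ => true) = 1 := by
  simpa [digitVal] using ofDigits_const_last_eq_one (b + 1)

lemma digitVal_false (b : ℕ) : digitVal b (fun _ => false) = 0 := by
  simp [digitVal, ofDigits, ofDigitsTerm]

lemma digitVal_split (b : ℕ) (s : ℕ → Bool) (n : ℕ) :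
    digitVal b s = (∑ i ∈ Finset.range n, (if s i then (b : ℝ) else 0) * (((b : ℝ) + 1) ^ (i + 1))⁻¹)
      + (((b : ℝ) + 1) ^ n)⁻¹ * digitVal b (fun i => s (i + n)) := by
  unfold digitVal
  rw [ofDigits_eq_sum_add_ofDigits _ n]
  simp only [ofDigitsTerm]
  push_cast
  congr 1
  refine Finset.sum_congr rfl fun i _ => ?_
  split_ifs <;> simp

/-- The jump between `w0111…` and `w1000…`: it is `3⁻⁽ⁿ⁺¹⁾` for ternary digits `0, 2`, and `0` for
binary digits. -/
lemma digitVal_gap (b : ℕ) (s : ℕ → Bool) (n : ℕ) :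
    digitVal (b + 1) (gapHi s n) - digitVal (b + 1) (gapLo s n) =
      (b : ℝ) * (((b : ℝ) + 2) ^ (n + 1))⁻¹ := by
  rw [digitVal_split _ (gapHi s n) (n + 1), digitVal_split _ (gapLo s n) (n + 1)]
  have h1 : (fun i => gapHi s n (i + (n + 1))) = fun _ => false := by
    funext i; simp only [gapHi]; rw [if_neg (by omega), if_neg (by omega)]
  have h2 : (fun i => gapLo s n (i + (n + 1))) = fun _ => true := by
    funext i; simp only [gapLo]; rw [if_neg (by omega), if_neg (by omega)]
  rw [h1, h2, digitVal_true, digitVal_false, Finset.sum_range_succ, Finset.sum_range_succ]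
  have h3 : ∀ i ∈ Finset.range n,
      (if gapHi s n i then ((b + 1 : ℕ) : ℝ) else 0) * ((((b + 1 : ℕ) : ℝ) + 1) ^ (i + 1))⁻¹ =
      (if gapLo s n i then ((b + 1 : ℕ) : ℝ) else 0) * ((((b + 1 : ℕ) : ℝ) + 1) ^ (i + 1))⁻¹ := by
    intro i hi
    have := Finset.mem_range.1 hi
    simp [gapHi, gapLo, this]
  rw [Finset.sum_congr rfl h3]
  simp only [gapHi, gapLo, lt_irrefl, if_false, if_true]
  push_cast
  rw [show (b : ℝ) + 1 + 1 = b + 2 by ring]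
  simp
  ring

lemma digitVal_two_gap (s : ℕ → Bool) (n : ℕ) :
    digitVal 2 (gapHi s n) - digitVal 2 (gapLo s n) = 1 / 3 ^ (n + 1) := by
  rw [digitVal_gap 1 s n]; norm_num

lemma digitVal_two_gap_lt (s : ℕ → Bool) (n : ℕ) :
    digitVal 2 (gapLo s n) < digitVal 2 (gapHi s n) := by
  have := digitVal_two_gap s n
  have h : (0 : ℝ) < 1 / 3 ^ (n + 1) := by positivity
  linarith

lemma digitVal_one_gap (s : ℕ → Bool) (n : ℕ) :
    digitVal 1 (gapHi s n) = digitVal 1 (gapLo s n) := by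
  have := digitVal_gap 0 s n
  simp only [Nat.cast_zero, zero_mul] at this
  linarith

lemma LexAt.le_gapLo {s s' : ℕ → Bool} {n : ℕ} (h : LexAt s s' n) : s ≤ gapLo s n := by
  intro i
  simp only [gapLo]
  split_ifs with h1 h2
  · exact le_rfl
  · rw [h2, h.2.1]
  · exact Bool.le_true _

lemma LexAt.gapHi_le {s s' : ℕ → Bool} {n : ℕ} (h : LexAt s s' n) : gapHi s n ≤ s' := by
  intro i
  simp only [gapHi]
  split_ifs with h1 h2
  · rw [h.1 i h1]
  · rw [h2, h.2.2]
  · exact Bool.false_le _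

lemma LexAt.digitVal_two_lt {s s' : ℕ → Bool} {n : ℕ} (h : LexAt s s' n) :
    digitVal 2 s < digitVal 2 s' :=
  (digitVal_mono 2 h.le_gapLo).trans_lt
    ((digitVal_two_gap_lt s n).trans_le (digitVal_mono 2 h.gapHi_le))

lemma LexAt.digitVal_one_le {s s' : ℕ → Bool} {n : ℕ} (h : LexAt s s' n) :
    digitVal 1 s ≤ digitVal 1 s' :=
  (digitVal_mono 1 h.le_gapLo).trans
    ((digitVal_one_gap s n).ge.trans (digitVal_mono 1 h.gapHi_le))

lemma exists_lexAt_of_lt {s s' : ℕ → Bool} (h : digitVal 2 s < digitVal 2 s') :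
    ∃ n, LexAt s s' n := by
  rcases lexAt_trichotomy s s' with rfl | h' | ⟨n, h'⟩
  · exact absurd h (lt_irrefl _)
  · exact h'
  · exact absurd h h'.digitVal_two_lt.not_gt

lemma digitVal_one_le_of_two_le {s s' : ℕ → Bool} (h : digitVal 2 s ≤ digitVal 2 s') :
    digitVal 1 s ≤ digitVal 1 s' := by
  rcases lexAt_trichotomy s s' with rfl | ⟨n, h'⟩ | ⟨n, h'⟩
  · exact le_rfl
  · exact h'.digitVal_one_le
  · exact absurd h h'.digitVal_two_lt.not_ge

/-- No point of the Cantor set lies strictly between `w0222…` and `w2000…`. -/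
lemma digitVal_two_gap_cases (s r : ℕ → Bool) (n : ℕ) :
    digitVal 2 r ≤ digitVal 2 (gapLo s n) ∨ digitVal 2 (gapHi s n) ≤ digitVal 2 r := by
  rcases lexAt_trichotomy r (gapLo s n) with rfl | ⟨m, h'⟩ | ⟨m, h'⟩
  · exact Or.inl le_rfl
  · exact Or.inl h'.digitVal_two_lt.le
  · right
    obtain ⟨h1, h2, h3⟩ := h'
    rcases lt_trichotomy m n with hm | hm | hm
    · refine (LexAt.digitVal_two_lt (n := m) ⟨fun i hi => ?_, ?_, h3⟩).le
      · rw [← h1 i hi]; simp [gapLo, gapHi, hi.trans hm]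
      · rw [← h2]; simp [gapLo, gapHi, hm]
    · subst hm
      refine digitVal_mono 2 fun i => ?_
      simp only [gapHi]
      split_ifs with h4 h5
      · rw [← h1 i h4]; simp [gapLo, h4]
      · rw [h5, h3]
      · exact Bool.false_le _
    · simp only [gapLo] at h2
      rw [if_neg (by omega), if_neg (by omega)] at h2
      simp at h2

/-! ### The Cantor set and its gaps -/

lemma cantorC_eq : cantorC = range (digitVal 2) := by
  classical
  ext x
  constructor
  · rintro ⟨a, ha, rfl⟩
    refine ⟨fun i => decide (a i = 2), ?_⟩
    refine tsum_congr fun i => ?_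
    rcases ha i with h | h <;> simp [ofDigitsTerm, h, div_eq_mul_inv]
  · rintro ⟨s, rfl⟩
    refine ⟨fun i => if s i then 2 else 0, fun i => ?_, ?_⟩
    · cases s i <;> simp
    · refine tsum_congr fun i => ?_
      cases h : s i <;> simp [ofDigitsTerm, h, div_eq_mul_inv]

lemma digitVal_mem_cantorC (s : ℕ → Bool) : digitVal 2 s ∈ cantorC := by
  rw [cantorC_eq]; exact mem_range_self s

lemma cantorC_subset : cantorC ⊆ Icc (0 : ℝ) 1 := by
  rw [cantorC_eq]; rintro _ ⟨s, rfl⟩; exact digitVal_mem 2 s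

lemma isCompact_cantorC : IsCompact cantorC := by
  rw [cantorC_eq]
  refine isCompact_range (continuous_ofDigits.comp (continuous_pi fun i => ?_))
  exact (continuous_of_discreteTopology (f := fun t : Bool => if t then Fin.last 2 else 0)).comp
    (continuous_apply i)

/-- The removed open interval determined by the first `n` digits of `s`; its length is
`3⁻⁽ⁿ⁺¹⁾`. -/
def gap (s : ℕ → Bool) (n : ℕ) : Set ℝ :=
  Ioo (digitVal 2 (gapLo s n)) (digitVal 2 (gapHi s n))

lemma gap_subset (s : ℕ → Bool) (n : ℕ) : gap s n ⊆ Icc (0 : ℝ) 1 \ cantorC := by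
  rintro x ⟨h1, h2⟩
  refine ⟨⟨(digitVal_mem 2 _).1.trans h1.le, h2.le.trans (digitVal_mem 2 _).2⟩, ?_⟩
  rw [cantorC_eq]
  rintro ⟨r, rfl⟩
  rcases digitVal_two_gap_cases s r n with h | h
  · exact h.not_gt h1
  · exact h.not_gt h2

lemma exists_mem_gap {x : ℝ} (hx : x ∈ Icc (0 : ℝ) 1 \ cantorC) : ∃ s n, x ∈ gap s n := by
  have h0 : (0 : ℝ) ∈ cantorC := digitVal_false 2 ▸ digitVal_mem_cantorC _
  have h1 : (1 : ℝ) ∈ cantorC := digitVal_true 1 ▸ digitVal_mem_cantorC _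
  -- The points of `C` nearest to `x` on either side.
  obtain ⟨a, ⟨haC, hax⟩, ha⟩ := (isCompact_cantorC.inter_right (isClosed_Iic (a := x))).exists_isGreatest
    ⟨0, h0, hx.1.1⟩
  obtain ⟨b, ⟨hbC, hbx⟩, hb⟩ := (isCompact_cantorC.inter_right (isClosed_Ici (a := x))).exists_isLeast
    ⟨1, h1, hx.1.2⟩
  have hax' : a < x := lt_of_le_of_ne hax fun h => hx.2 (h ▸ haC)
  have hbx' : x < b := lt_of_le_of_ne hbx fun h => hx.2 (h ▸ hbC)
  rw [cantorC_eq] at haC hbC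
  obtain ⟨s, rfl⟩ := haC
  obtain ⟨s', rfl⟩ := hbC
  obtain ⟨n, hn⟩ := exists_lexAt_of_lt (hax'.trans hbx')
  have hlt := digitVal_two_gap_lt s n
  have e1 := digitVal_mono 2 hn.le_gapLo
  have e2 := digitVal_mono 2 hn.gapHi_le
  refine ⟨s, n, ?_, ?_⟩
  · by_contra! h
    have := hb ⟨digitVal_mem_cantorC (gapLo s n), h⟩
    linarith
  · by_contra! h
    have := ha ⟨digitVal_mem_cantorC (gapHi s n), h⟩
    linarith

lemma gap_mem_cantorCk (s : ℕ → Bool) (n : ℕ) : gap s n ∈ cantorCk (n + 1) := by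
  refine ⟨?_, _, _, rfl, digitVal_two_gap s n⟩
  obtain ⟨x, hx⟩ := exists_between (digitVal_two_gap_lt s n)
  have hxm : x ∈ Icc (0 : ℝ) 1 \ cantorC := gap_subset s n hx
  refine ⟨x, hxm, Subset.antisymm ?_ fun y hy => ?_⟩
  · exact isPreconnected_Ioo.subset_connectedComponentIn hx (gap_subset s n)
  -- A connected set avoiding `C` cannot reach beyond the endpoints, which lie in `C`.
  · have hoc := (isPreconnected_connectedComponentIn
      (F := Icc (0 : ℝ) 1 \ cantorC) (x := x)).ordConnected
    have hx' := mem_connectedComponentIn hxm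
    constructor
    · by_contra! h
      have := connectedComponentIn_subset _ _ (hoc.out hy hx' ⟨h, hx.1.le⟩)
      exact this.2 (digitVal_mem_cantorC _)
    · by_contra! h
      have := connectedComponentIn_subset _ _ (hoc.out hx' hy ⟨hx.2.le, h⟩)
      exact this.2 (digitVal_mem_cantorC _)

lemma cantorCk_subset {k : ℕ} {S : Set ℝ} (hS : S ∈ cantorCk k) : S ⊆ Icc (0 : ℝ) 1 \ cantorC := by
  obtain ⟨⟨x, -, rfl⟩, -⟩ := hS
  exact connectedComponentIn_subset _ _

lemma cantorCk_index_unique {k k' : ℕ} {S S' : Set ℝ} (hS : S ∈ cantorCk k) (hS' : S' ∈ cantorCk k')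
    {y : ℝ} (hy : y ∈ S) (hy' : y ∈ S') : k = k' := by
  obtain ⟨⟨x, -, hx⟩, a, b, hab, hl⟩ := hS
  obtain ⟨⟨x', -, hx'⟩, a', b', hab', hl'⟩ := hS'
  have hSS : S = S' := by
    rw [hx] at hy ⊢
    rw [hx'] at hy' ⊢
    rw [connectedComponentIn_eq hy, connectedComponentIn_eq hy']
  have hy1 : a < b := by rw [hab] at hy; exact hy.1.trans hy.2
  have hy2 : a' < b' := by rw [hab'] at hy'; exact hy'.1.trans hy'.2
  rw [hab, hab'] at hSS
  have e1 : a = a' := by rw [← csInf_Ioo hy1, hSS, csInf_Ioo hy2]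
  have e2 : b = b' := by rw [← csSup_Ioo hy1, hSS, csSup_Ioo hy2]
  subst e1 e2
  have h3 : (3 : ℝ) ^ k = 3 ^ k' := by
    have := hl.symm.trans hl'
    simpa using this
  exact pow_right_injective₀ (by norm_num : (0 : ℝ) < 3) (by norm_num) h3

lemma mem_cantorKodd {x : ℝ} : x ∈ cantorKodd ↔ ∃ k, Odd k ∧ ∃ S ∈ cantorCk k, x ∈ S := by
  simp only [cantorKodd, mem_iUnion, mem_ofPred_eq, exists_prop]
  exact ⟨fun ⟨k, h, h'⟩ => ⟨k, h.2, h'⟩, fun ⟨k, h, h'⟩ => ⟨k, ⟨h.pos, h⟩, h'⟩⟩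

lemma mem_cantorKeven {x : ℝ} :
    x ∈ cantorKeven ↔ ∃ k, 1 ≤ k ∧ Even k ∧ ∃ S ∈ cantorCk k, x ∈ S := by
  simp only [cantorKeven, mem_iUnion, mem_ofPred_eq, exists_prop, and_assoc]

lemma cantorKodd_subset : cantorKodd ⊆ Icc (0 : ℝ) 1 \ cantorC := fun x hx => by
  obtain ⟨k, -, S, hS, hxS⟩ := mem_cantorKodd.1 hx
  exact cantorCk_subset hS hxS

lemma cantorKeven_subset : cantorKeven ⊆ Icc (0 : ℝ) 1 \ cantorC := fun x hx => by
  obtain ⟨k, -, -, S, hS, hxS⟩ := mem_cantorKeven.1 hx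
  exact cantorCk_subset hS hxS

lemma notMem_cantorKeven_of_odd {x : ℝ} (h : x ∈ cantorKodd) : x ∉ cantorKeven := fun h' => by
  obtain ⟨k, hk, S, hS, hxS⟩ := mem_cantorKodd.1 h
  obtain ⟨k', -, hk', S', hS', hxS'⟩ := mem_cantorKeven.1 h'
  have := cantorCk_index_unique hS hS' hxS hxS'
  subst this
  exact (Nat.not_even_iff_odd.2 hk) hk'

lemma isOpen_cantorKodd : IsOpen cantorKodd := by
  refine isOpen_biUnion fun k _ => isOpen_biUnion fun S hS => ?_
  obtain ⟨-, a, b, rfl, -⟩ := hS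
  exact isOpen_Ioo

lemma isOpen_cantorKeven : IsOpen cantorKeven := by
  refine isOpen_biUnion fun k _ => isOpen_biUnion fun S hS => ?_
  obtain ⟨-, a, b, rfl, -⟩ := hS
  exact isOpen_Ioo

lemma gap_subset_cantorKodd {s : ℕ → Bool} {n : ℕ} (h : Odd (n + 1)) : gap s n ⊆ cantorKodd :=
  fun _ hx => mem_cantorKodd.2 ⟨_, h, _, gap_mem_cantorCk s n, hx⟩

lemma gap_subset_cantorKeven {s : ℕ → Bool} {n : ℕ} (h : Even (n + 1)) : gap s n ⊆ cantorKeven :=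
  fun _ hx => mem_cantorKeven.2 ⟨_, by omega, h, _, gap_mem_cantorCk s n, hx⟩

/-! ### The space `K` -/

lemma mem_spaceK {x t : ℝ} : (x, t) ∈ spaceK ↔
    (x ∈ cantorC ∧ t ∈ Icc (0 : ℝ) 1) ∨ (x ∈ cantorKeven ∧ t = 0) ∨ (x ∈ cantorKodd ∧ t = 1) := by
  simp [spaceK, or_assoc]

lemma snd_eq_zero_of_even {p : ℝ × ℝ} (hp : p ∈ spaceK) (h : p.1 ∈ cantorKeven) : p.2 = 0 := by
  rcases mem_spaceK.1 hp with h' | h' | h'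
  · exact absurd h'.1 (cantorKeven_subset h).2
  · exact h'.2
  · exact absurd h (notMem_cantorKeven_of_odd h'.1)

lemma snd_eq_one_of_odd {p : ℝ × ℝ} (hp : p ∈ spaceK) (h : p.1 ∈ cantorKodd) : p.2 = 1 := by
  rcases mem_spaceK.1 hp with h' | h' | h'
  · exact absurd h'.1 (cantorKodd_subset h).2
  · exact absurd h'.1 (notMem_cantorKeven_of_odd h)
  · exact h'.2

/-- A description of `K` by closed conditions: in the unit square, remove everything over the open
set `K_odd` except height `1`, and everything over the open set `K_even` except height `0`. -/
lemma spaceK_eq : spaceK = (Icc (0 : ℝ) 1 ×ˢ Icc (0 : ℝ) 1) ∩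
    ((Prod.fst ⁻¹' cantorKoddᶜ ∪ Prod.snd ⁻¹' {1}) ∩
      (Prod.fst ⁻¹' cantorKevenᶜ ∪ Prod.snd ⁻¹' {0})) := by
  ext ⟨x, t⟩
  constructor
  · intro hp
    refine ⟨?_, ?_, ?_⟩
    · rcases mem_spaceK.1 hp with h | h | h
      · exact ⟨cantorC_subset h.1, h.2⟩
      · exact ⟨(cantorKeven_subset h.1).1, by simp [h.2]⟩
      · exact ⟨(cantorKodd_subset h.1).1, by simp [h.2]⟩
    · by_cases h : x ∈ cantorKodd
      · exact Or.inr (snd_eq_one_of_odd hp h)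
      · exact Or.inl h
    · by_cases h : x ∈ cantorKeven
      · exact Or.inr (snd_eq_zero_of_even hp h)
      · exact Or.inl h
  · rintro ⟨⟨hx, ht⟩, h1, h2⟩
    rw [mem_spaceK]
    by_cases hC : x ∈ cantorC
    · exact Or.inl ⟨hC, ht⟩
    · obtain ⟨s, n, hg⟩ := exists_mem_gap ⟨hx, hC⟩
      rcases Nat.even_or_odd (n + 1) with hn | hn
      · have h := gap_subset_cantorKeven hn hg
        exact Or.inr (Or.inl ⟨h, h2.resolve_left fun h' => h' h⟩)
      · have h := gap_subset_cantorKodd hn hg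
        exact Or.inr (Or.inr ⟨h, h1.resolve_left fun h' => h' h⟩)

lemma isCompact_spaceK : IsCompact spaceK := by
  rw [spaceK_eq]
  refine (isCompact_Icc.prod isCompact_Icc).inter_right (IsClosed.inter ?_ ?_)
  · exact (isOpen_cantorKodd.isClosed_compl.preimage continuous_fst).union
      (isClosed_singleton.preimage continuous_snd)
  · exact (isOpen_cantorKeven.isClosed_compl.preimage continuous_fst).union
      (isClosed_singleton.preimage continuous_snd)

instance compactSpace_spaceK : CompactSpace spaceK := isCompact_iff_compactSpace.1 isCompact_spaceK

lemma fst_mem_Icc {p : ℝ × ℝ} (hp : p ∈ spaceK) : p.1 ∈ Icc (0 : ℝ) 1 := by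
  rw [spaceK_eq] at hp; exact hp.1.1

/-! ### The Cantor function -/

/-- The Cantor function: the least monotone extension to `[0,1]` of the map sending a point of `C`
with ternary digits `2 sᵢ` to the number with binary digits `sᵢ`. For `x < 0` the set is empty and
the value is the default `0`. -/
noncomputable def cantorFun (x : ℝ) : ℝ := sSup (digitVal 1 '' {s | digitVal 2 s ≤ x})

lemma cantorFun_bddAbove (x : ℝ) : BddAbove (digitVal 1 '' {s | digitVal 2 s ≤ x}) :=
  ⟨1, by rintro _ ⟨s, -, rfl⟩; exact (digitVal_mem 1 s).2⟩

lemma cantorFun_mem (x : ℝ) : cantorFun x ∈ Icc (0 : ℝ) 1 :=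
  ⟨Real.sSup_nonneg (by rintro _ ⟨s, -, rfl⟩; exact (digitVal_mem 1 s).1),
    Real.sSup_le (by rintro _ ⟨s, -, rfl⟩; exact (digitVal_mem 1 s).2) zero_le_one⟩

lemma cantorFun_mono : Monotone cantorFun := by
  intro x y hxy
  refine Real.sSup_le ?_ (cantorFun_mem y).1
  rintro _ ⟨s, hs, rfl⟩
  exact le_csSup (cantorFun_bddAbove y) ⟨s, le_trans hs hxy, rfl⟩

lemma cantorFun_digitVal (s : ℕ → Bool) : cantorFun (digitVal 2 s) = digitVal 1 s := by
  refine le_antisymm (Real.sSup_le ?_ (digitVal_mem 1 s).1)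
    (le_csSup (cantorFun_bddAbove _) ⟨s, le_refl (digitVal 2 s), rfl⟩)
  rintro _ ⟨r, hr, rfl⟩
  exact digitVal_one_le_of_two_le hr

lemma digitVal_one_surjOn {y : ℝ} (hy : y ∈ Icc (0 : ℝ) 1) : ∃ s, digitVal 1 s = y := by
  obtain ⟨d, -, rfl⟩ := ofDigits_SurjOn (b := 2) (by norm_num) hy
  refine ⟨fun i => decide (d i = 1), tsum_congr fun i => ?_⟩
  have : d i = 0 ∨ d i = 1 := by omega
  rcases this with h | h <;> simp [ofDigitsTerm, h]

lemma continuous_cantorFun : Continuous cantorFun := by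
  let g : ℝ → Icc (0 : ℝ) 1 := fun x => ⟨cantorFun x, cantorFun_mem x⟩
  have hg : Continuous g := by
    refine Monotone.continuous_of_surjective (fun x y h => cantorFun_mono h) fun y => ?_
    obtain ⟨s, hs⟩ := digitVal_one_surjOn y.2
    exact ⟨digitVal 2 s, Subtype.ext ((cantorFun_digitVal s).trans hs)⟩
  exact continuous_subtype_val.comp hg

/-- Between two points with different Cantor function values there are removed intervals of every
large level, hence of both parities. -/
lemma exists_gap_between {x y : ℝ} (h : cantorFun x < cantorFun y) :
    ∃ N : ℕ, ∀ n ≥ N, ∃ s, x < digitVal 2 (gapLo s n) ∧ digitVal 2 (gapHi s n) < y := by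
  set u := cantorFun x
  set v := cantorFun y
  obtain ⟨s, hs⟩ := digitVal_one_surjOn (y := (u + v) / 2)
    ⟨by linarith [(cantorFun_mem x).1, (cantorFun_mem y).1],
      by linarith [(cantorFun_mem x).2, (cantorFun_mem y).2]⟩
  obtain ⟨N, hN⟩ := exists_pow_lt_of_lt_one (show 0 < (v - u) / 2 by linarith)
    (show (2 : ℝ)⁻¹ < 1 by norm_num)
  refine ⟨N, fun n hn => ⟨s, ?_⟩⟩
  have h1 : |digitVal 1 (gapLo s n) - digitVal 1 s| ≤ ((2 : ℝ) ^ n)⁻¹ := by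
    have := abs_ofDigits_sub_ofDigits_le (b := 2) (n := n)
      (x := fun i => if gapLo s n i then Fin.last 1 else 0)
      (y := fun i => if s i then Fin.last 1 else 0) (fun i hi => by simp [gapLo, hi])
    exact_mod_cast this
  have h2 : ((2 : ℝ) ^ n)⁻¹ ≤ (2 : ℝ)⁻¹ ^ N := by
    rw [← inv_pow]
    exact pow_le_pow_of_le_one (by norm_num) (by norm_num) hn
  obtain ⟨h3, h4⟩ := abs_lt.1 (h1.trans_lt (h2.trans_lt hN))
  constructor
  · by_contra! hle
    have := cantorFun_mono hle
    rw [cantorFun_digitVal] at this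
    change _ ≤ u at this
    linarith
  · by_contra! hle
    have := cantorFun_mono hle
    rw [cantorFun_digitVal, digitVal_one_gap] at this
    change v ≤ _ at this
    linarith

/-! ### Paths in `K` -/

/-- The composite `K → [0,1] → [0,1]` of the first projection with the Cantor function. -/
noncomputable def heightMap (p : spaceK) : unitInterval := ⟨cantorFun p.1.1, cantorFun_mem _⟩

lemma continuous_heightMap : Continuous heightMap :=
  (continuous_cantorFun.comp (continuous_fst.comp continuous_subtype_val)).subtype_mk _

lemma surjective_heightMap : Function.Surjective heightMap := by
  intro y
  obtain ⟨s, hs⟩ := digitVal_one_surjOn y.2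
  exact ⟨⟨(digitVal 2 s, 0), mem_spaceK.2 (Or.inl ⟨digitVal_mem_cantorC s, by simp⟩)⟩,
    Subtype.ext ((cantorFun_digitVal s).trans hs)⟩

/-- A connected subset of `K` on which the second coordinate varies by less than `1` cannot cross
removed intervals of both parities, so the Cantor function is constant on it. -/
lemma cantorFun_le_of_preconnected {A : Set (ℝ × ℝ)} (hA : IsPreconnected A) (hAK : A ⊆ spaceK)
    (hsmall : ∀ p ∈ A, ∀ q ∈ A, p.2 - q.2 < 1) {p q : ℝ × ℝ} (hp : p ∈ A) (hq : q ∈ A) :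
    cantorFun q.1 ≤ cantorFun p.1 := by
  by_contra! h
  obtain ⟨N, hN⟩ := exists_gap_between h
  have hoc := (hA.image Prod.fst continuous_fst.continuousOn).ordConnected
  have key : ∀ n ≥ N, ∃ r ∈ A, ∃ s, r.1 ∈ gap s n := by
    intro n hn
    obtain ⟨s, hs1, hs2⟩ := hN n hn
    obtain ⟨m, hm1, hm2⟩ := exists_between (digitVal_two_gap_lt s n)
    obtain ⟨r, hr, rfl⟩ := hoc.out (mem_image_of_mem _ hp) (mem_image_of_mem _ hq)
      (⟨(hs1.trans hm1).le, (hm2.trans hs2).le⟩ : m ∈ Icc p.1 q.1)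
    exact ⟨r, hr, s, hm1, hm2⟩
  obtain ⟨r, hr, s, hrs⟩ := key (2 * N) (by omega)
  obtain ⟨r', hr', s', hrs'⟩ := key (2 * N + 1) (by omega)
  have h1 := snd_eq_one_of_odd (hAK hr) (gap_subset_cantorKodd ⟨N, rfl⟩ hrs)
  have h2 := snd_eq_zero_of_even (hAK hr') (gap_subset_cantorKeven ⟨N + 1, by ring⟩ hrs')
  have := hsmall r hr r' hr'
  rw [h1, h2] at this
  norm_num at this

lemma heightMap_eq_of_joined {p q : spaceK} (h : Joined p q) : heightMap p = heightMap q := by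
  obtain ⟨γ⟩ := h
  have hc : Continuous fun t => (γ t : ℝ × ℝ) := continuous_subtype_val.comp γ.continuous
  have hloc : IsLocallyConstant fun t => heightMap (γ t) := by
    rw [IsLocallyConstant.iff_eventually_eq]
    intro t
    have hc2 : Continuous fun t => (γ t : ℝ × ℝ).2 := continuous_snd.comp hc
    -- Near `t` the path changes height by less than `1`.
    obtain ⟨ε, hε, hV⟩ := Metric.mem_nhds_iff.1 (hc2.continuousAt.preimage_mem_nhds
      (Metric.ball_mem_nhds _ (show (0 : ℝ) < 1 / 2 by norm_num)))
    set V := Metric.ball t ε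
    have htV : t ∈ V := Metric.mem_ball_self hε
    have hVc : IsPreconnected V := by
      refine OrdConnected.isPreconnected ⟨fun a ha b hb c hcab => ?_⟩
      have h1 : (a : ℝ) ≤ c := hcab.1
      have h2 : (c : ℝ) ≤ b := hcab.2
      simp only [V, Metric.mem_ball, Subtype.dist_eq, Real.dist_eq, abs_lt] at ha hb ⊢
      constructor <;> linarith [ha.1, ha.2, hb.1, hb.2]
    filter_upwards [Metric.ball_mem_nhds t hε] with t' ht'
    have hle : ∀ a ∈ V, ∀ b ∈ V, cantorFun (γ b : ℝ × ℝ).1 ≤ cantorFun (γ a : ℝ × ℝ).1 := by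
      intro a ha b hb
      refine cantorFun_le_of_preconnected (hVc.image _ hc.continuousOn) ?_ ?_
        (mem_image_of_mem _ ha) (mem_image_of_mem _ hb)
      · rintro _ ⟨c, -, rfl⟩
        exact (γ c).2
      · rintro _ ⟨c, hc, rfl⟩ _ ⟨d, hd, rfl⟩
        have e1 := hV hc
        have e2 := hV hd
        simp only [mem_preimage, Metric.mem_ball, Real.dist_eq, abs_lt] at e1 e2
        change (γ c : ℝ × ℝ).2 - (γ d : ℝ × ℝ).2 < 1
        linarith [e1.1, e1.2, e2.1, e2.2]
    exact Subtype.ext (le_antisymm (hle _ htV _ ht') (hle _ ht' _ htV))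
  have := hloc.apply_eq_of_preconnectedSpace 0 1
  simpa using this

lemma joinedIn_vertical {x t t' : ℝ} (hx : x ∈ cantorC) (ht : t ∈ Icc (0 : ℝ) 1)
    (ht' : t' ∈ Icc (0 : ℝ) 1) : JoinedIn spaceK (x, t) (x, t') := by
  have hconv : Convex ℝ (({x} : Set ℝ) ×ˢ Icc (0 : ℝ) 1) := (convex_singleton x).prod (convex_Icc 0 1)
  refine ((hconv.isPathConnected ⟨(x, t), rfl, ht⟩).joinedIn (x, t) ⟨rfl, ht⟩ (x, t') ⟨rfl, ht'⟩).mono ?_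
  rintro ⟨y, u⟩ ⟨hy, hu⟩
  obtain rfl : y = x := hy
  exact mem_spaceK.2 (Or.inl ⟨hx, hu⟩)

/-- The closure of each removed interval is bridged in `K` by a horizontal segment at height `0` or
`1`. -/
lemma exists_bridge (s : ℕ → Bool) (n : ℕ) : ∃ j ∈ Icc (0 : ℝ) 1,
    (∀ x t, x ∈ gap s n → (x, t) ∈ spaceK → t = j) ∧
    ∀ x ∈ Icc (digitVal 2 (gapLo s n)) (digitVal 2 (gapHi s n)),
      ∀ y ∈ Icc (digitVal 2 (gapLo s n)) (digitVal 2 (gapHi s n)), JoinedIn spaceK (x, j) (y, j) := by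
  obtain ⟨j, hj, hj1, hj2⟩ : ∃ j ∈ Icc (0 : ℝ) 1, (∀ x ∈ gap s n, (x, j) ∈ spaceK) ∧
      ∀ x t, x ∈ gap s n → (x, t) ∈ spaceK → t = j := by
    rcases Nat.even_or_odd (n + 1) with hn | hn
    · exact ⟨0, by simp, fun x hx => mem_spaceK.2 (Or.inr (Or.inl ⟨gap_subset_cantorKeven hn hx, rfl⟩)),
        fun x t hx h => snd_eq_zero_of_even h (gap_subset_cantorKeven hn hx)⟩
    · exact ⟨1, by simp, fun x hx => mem_spaceK.2 (Or.inr (Or.inr ⟨gap_subset_cantorKodd hn hx, rfl⟩)),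
        fun x t hx h => snd_eq_one_of_odd h (gap_subset_cantorKodd hn hx)⟩
  refine ⟨j, hj, hj2, fun x hx y hy => ?_⟩
  have hconv : Convex ℝ (Icc (digitVal 2 (gapLo s n)) (digitVal 2 (gapHi s n)) ×ˢ ({j} : Set ℝ)) :=
    (convex_Icc _ _).prod (convex_singleton j)
  refine ((hconv.isPathConnected ⟨(x, j), hx, rfl⟩).joinedIn (x, j) ⟨hx, rfl⟩ (y, j) ⟨hy, rfl⟩).mono ?_
  rintro ⟨z, u⟩ ⟨hz, hu⟩
  obtain rfl : u = j := hu
  simp only at hz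
  rcases eq_or_lt_of_le hz.1 with h | h
  · exact mem_spaceK.2 (Or.inl ⟨h ▸ digitVal_mem_cantorC _, hj⟩)
  rcases eq_or_lt_of_le hz.2 with h' | h'
  · exact mem_spaceK.2 (Or.inl ⟨h' ▸ digitVal_mem_cantorC _, hj⟩)
  exact hj1 z ⟨h, h'⟩

lemma exists_joinedIn_column {p : ℝ × ℝ} (hp : p ∈ spaceK) :
    ∃ s, JoinedIn spaceK p (digitVal 2 s, 0) := by
  obtain ⟨x, t⟩ := p
  by_cases hC : x ∈ cantorC
  · have hC' := hC
    rw [cantorC_eq] at hC'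
    obtain ⟨s, rfl⟩ := hC'
    rw [spaceK_eq] at hp
    exact ⟨s, joinedIn_vertical hC hp.1.2 (by simp)⟩
  · obtain ⟨s, n, hg⟩ := exists_mem_gap ⟨fst_mem_Icc hp, hC⟩
    obtain ⟨j, hj, hj1, hj2⟩ := exists_bridge s n
    obtain rfl := hj1 x t hg hp
    exact ⟨gapHi s n, (hj2 x ⟨hg.1.le, hg.2.le⟩ _ ⟨(digitVal_two_gap_lt s n).le, le_rfl⟩).trans
      (joinedIn_vertical (digitVal_mem_cantorC _) hj (by simp))⟩

/-- Two distinct points of `C` with the same image under the Cantor function are the two endpoints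
of one removed interval, so the segments of `K` above them are joined by a bridge. -/
lemma joinedIn_columns_of_lexAt {s s' : ℕ → Bool} {n : ℕ} (h : LexAt s s' n)
    (he : digitVal 1 s = digitVal 1 s') :
    JoinedIn spaceK (digitVal 2 s, 0) (digitVal 2 s', 0) := by
  have h1 := digitVal_mono 1 h.le_gapLo
  have h2 := digitVal_mono 1 h.gapHi_le
  have h3 := digitVal_one_gap s n
  have hs : s = gapLo s n := by
    by_contra hne
    have := digitVal_strictMono one_pos (lt_of_le_of_ne h.le_gapLo hne)
    linarith
  have hs' : gapHi s n = s' := by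
    by_contra hne
    have := digitVal_strictMono one_pos (lt_of_le_of_ne h.gapHi_le hne)
    linarith
  have hlt := (digitVal_two_gap_lt s n).le
  obtain ⟨j, hj, -, hj2⟩ := exists_bridge s n
  have hb := hj2 _ ⟨le_rfl, hlt⟩ _ ⟨hlt, le_rfl⟩
  rw [← hs, hs'] at hb
  exact ((joinedIn_vertical (digitVal_mem_cantorC s) (by simp) hj).trans hb).trans
    (joinedIn_vertical (digitVal_mem_cantorC s') hj (by simp))

lemma joinedIn_columns {s s' : ℕ → Bool} (he : digitVal 1 s = digitVal 1 s') :
    JoinedIn spaceK (digitVal 2 s, 0) (digitVal 2 s', 0) := by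
  rcases lexAt_trichotomy s s' with rfl | ⟨n, h⟩ | ⟨n, h⟩
  · exact joinedIn_vertical (digitVal_mem_cantorC s) (by simp) (by simp)
  · exact joinedIn_columns_of_lexAt h he
  · exact (joinedIn_columns_of_lexAt h he.symm).symm

lemma joined_of_heightMap_eq {p q : spaceK} (h : heightMap p = heightMap q) : Joined p q := by
  obtain ⟨s, hs⟩ := exists_joinedIn_column p.2
  obtain ⟨s', hs'⟩ := exists_joinedIn_column q.2
  have e1 := heightMap_eq_of_joined ((joinedIn_iff_joined p.2 hs.target_mem).1 hs)
  have e2 := heightMap_eq_of_joined ((joinedIn_iff_joined q.2 hs'.target_mem).1 hs')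
  have e3 : digitVal 1 s = digitVal 1 s' := by
    have := congrArg Subtype.val (e1.symm.trans (h.trans e2))
    simpa only [heightMap, cantorFun_digitVal] using this
  exact (joinedIn_iff_joined p.2 q.2).1 ((hs.trans (joinedIn_columns e3)).trans hs'.symm)

/-- `π₀(K) ≅ [0,1]` and the quotient map `q_K : K → π₀(K)` is perfect
(closed with compact fibers, the domain being Hausdorff). -/
theorem pi0_spaceK :
    Nonempty (ZerothHomotopy spaceK ≃ₜ unitInterval) ∧
    IsClosedMap (pi0Mk : spaceK → ZerothHomotopy spaceK) ∧
    ∀ z : ZerothHomotopy spaceK, IsCompact ((pi0Mk : spaceK → _) ⁻¹' {z}) := by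
  let g : ZerothHomotopy spaceK → unitInterval :=
    Quotient.lift heightMap fun _ _ h => heightMap_eq_of_joined h
  have hgc : Continuous g := continuous_heightMap.quotient_lift _
  have hgb : Function.Bijective g := by
    refine ⟨?_, fun y => ?_⟩
    · rintro ⟨p⟩ ⟨q⟩ h
      exact Quotient.sound (joined_of_heightMap_eq h)
    · obtain ⟨p, hp⟩ := surjective_heightMap y
      exact ⟨pi0Mk p, hp⟩
  have : CompactSpace (ZerothHomotopy spaceK) := Quotient.compactSpace
  let e : ZerothHomotopy spaceK ≃ₜ unitInterval :=
    Continuous.homeoOfEquivCompactToT2 (f := Equiv.ofBijective g hgb) hgc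
  have hmk : Continuous (pi0Mk : spaceK → ZerothHomotopy spaceK) := continuous_quotient_mk'
  have : T2Space (ZerothHomotopy spaceK) := e.symm.t2Space
  exact ⟨⟨e⟩, hmk.isClosedMap, fun z => (isClosed_singleton.preimage hmk).isCompact⟩
end

section
/- With K ⊆ [0,1]² as constructed from the Cantor set (K = (C × [0,1]) ∪ (K_even × {0}) ∪ (K_odd × {1})), any continuous path α : [0,1] → K whose endpoints lie over two distinct points of the Cantor set C that are not endpoints of the same removed interval leads to a contradiction; equivalently, the path components of K are exactly the sets {c} × [0,1] for c ∈ C not an endpoint of a removed interval, together with the sets π⁻¹(closure(I)) for removed intervals I. -/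
/-- The set of endpoints of the removed intervals. -/
def cantorE : Set ℝ :=
  {x | ∃ S ∈ removedComponents, ∃ a b : ℝ, S = Set.Ioo a b ∧ (x = a ∨ x = b)}

open Set Filter Topology

/-! ### Gaps of the Cantor set -/

lemma cantorC_eq_s10 : cantorC = cantorSet := by
  rw [cantorSet_eq_zero_two_ofDigits]
  ext x
  constructor
  · rintro ⟨a, ha, rfl⟩
    refine ⟨fun i => if a i = 0 then 0 else 2, fun i => by dsimp only; split_ifs <;> decide, ?_⟩
    unfold Real.ofDigits Real.ofDigitsTerm
    congr 1
    ext i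
    rcases ha i with h | h <;> simp [h, div_eq_mul_inv]
  · rintro ⟨a, ha, rfl⟩
    refine ⟨fun i => ((a i : ℕ) : ℝ), fun i => ?_, ?_⟩
    · have h3 : ∀ t : Fin 3, t ≠ 1 → ((t : ℕ) : ℝ) = 0 ∨ ((t : ℕ) : ℝ) = 2 := by
        intro t ht
        fin_cases t <;> simp_all
      exact h3 _ (ha i)
    · unfold Real.ofDigits Real.ofDigitsTerm
      simp [div_eq_mul_inv]

/-- `(a, b)` is a gap of the Cantor set: a nonempty open interval missing the Cantor set whose
endpoints belong to it. -/
def IsGap (a b : ℝ) : Prop :=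
  a ∈ cantorSet ∧ b ∈ cantorSet ∧ a < b ∧ ∀ y ∈ cantorSet, y ≤ a ∨ b ≤ y

lemma mem_cantorSet_cases {y : ℝ} (hy : y ∈ cantorSet) :
    ∃ z ∈ cantorSet, y = z / 3 ∨ y = (2 + z) / 3 := by
  rw [cantorSet_eq_union_halves] at hy
  rcases hy with ⟨z, hz, rfl⟩ | ⟨z, hz, rfl⟩
  · exact ⟨z, hz, Or.inl rfl⟩
  · exact ⟨z, hz, Or.inr rfl⟩

lemma div_three_mem {z : ℝ} (hz : z ∈ cantorSet) : z / 3 ∈ cantorSet := by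
  rw [cantorSet_eq_union_halves]
  exact Or.inl ⟨z, hz, rfl⟩

lemma two_add_div_three_mem {z : ℝ} (hz : z ∈ cantorSet) : (2 + z) / 3 ∈ cantorSet := by
  rw [cantorSet_eq_union_halves]
  exact Or.inr ⟨z, hz, rfl⟩

lemma one_mem_cantorSet : (1 : ℝ) ∈ cantorSet := by
  rw [← cantorC_eq_s10]
  refine ⟨fun _ => 2, fun _ => Or.inr rfl, ?_⟩
  have h := (hasSum_geometric_of_lt_one (r := (1 / 3 : ℝ)) (by norm_num) (by norm_num)).mul_left
    (2 / 3)
  have h2 : (fun i : ℕ => (2 : ℝ) / 3 ^ (i + 1)) = fun i => 2 / 3 * (1 / 3) ^ i := by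
    ext i
    rw [pow_succ, one_div, inv_pow]
    field_simp
  rw [h2, h.tsum_eq]
  norm_num

lemma isGap_middle : IsGap (1 / 3) (2 / 3) := by
  refine ⟨div_three_mem one_mem_cantorSet, ?_, by norm_num, fun y hy => ?_⟩
  · simpa using two_add_div_three_mem zero_mem_cantorSet
  · obtain ⟨z, hz, rfl | rfl⟩ := mem_cantorSet_cases hy
    · left; linarith [(cantorSet_subset_unitInterval hz).2]
    · right; linarith [(cantorSet_subset_unitInterval hz).1]

lemma IsGap.div_three {a b : ℝ} (h : IsGap a b) : IsGap (a / 3) (b / 3) := by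
  obtain ⟨ha, hb, hab, hy⟩ := h
  refine ⟨div_three_mem ha, div_three_mem hb, by linarith, fun y hyC => ?_⟩
  obtain ⟨z, hz, rfl | rfl⟩ := mem_cantorSet_cases hyC
  · rcases hy z hz with h | h
    · left; linarith
    · right; linarith
  · right
    linarith [(cantorSet_subset_unitInterval hz).1, (cantorSet_subset_unitInterval hb).2]

lemma IsGap.two_add_div_three {a b : ℝ} (h : IsGap a b) :
    IsGap ((2 + a) / 3) ((2 + b) / 3) := by
  obtain ⟨ha, hb, hab, hy⟩ := h
  refine ⟨two_add_div_three_mem ha, two_add_div_three_mem hb, by linarith, fun y hyC => ?_⟩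
  obtain ⟨z, hz, rfl | rfl⟩ := mem_cantorSet_cases hyC
  · left
    linarith [(cantorSet_subset_unitInterval hz).2, (cantorSet_subset_unitInterval ha).1]
  · rcases hy z hz with h | h
    · left; linarith
    · right; linarith

/-- Every point of `[0,1] \ C` lies in a gap of length `3⁻ᵏ` with `k ≥ 1`. -/
lemma exists_gap {x : ℝ} (hx : x ∈ Icc (0 : ℝ) 1) (hxC : x ∉ cantorSet) :
    ∃ k a b, 1 ≤ k ∧ IsGap a b ∧ b - a = (1 : ℝ) / 3 ^ k ∧ x ∈ Ioo a b := by
  obtain ⟨n, hn⟩ : ∃ n, x ∉ preCantorSet n := by simpa [cantorSet] using hxC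
  clear hxC
  induction n generalizing x with
  | zero => exact absurd hx hn
  | succ n ih =>
    rw [preCantorSet_succ, mem_union, not_or] at hn
    obtain ⟨hn1, hn2⟩ := hn
    rcases le_or_gt x (1 / 3) with h1 | h1
    · obtain ⟨k, a, b, hk, hg, hl, hxa, hxb⟩ := ih (x := 3 * x)
        ⟨by linarith [hx.1], by linarith⟩ (fun h => hn1 ⟨_, h, by simp⟩)
      refine ⟨k + 1, _, _, by omega, hg.div_three, ?_, by linarith, by linarith⟩
      rw [← sub_div, hl, pow_succ, div_div]
    rcases le_or_gt (2 / 3) x with h2 | h2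
    · obtain ⟨k, a, b, hk, hg, hl, hxa, hxb⟩ := ih (x := 3 * x - 2)
        ⟨by linarith, by linarith [hx.2]⟩ (fun h => hn2 ⟨_, h, by simp⟩)
      refine ⟨k + 1, _, _, by omega, hg.two_add_div_three, ?_, by linarith, by linarith⟩
      rw [← sub_div, add_sub_add_left_eq_sub, hl, pow_succ, div_div]
    · exact ⟨1, _, _, le_rfl, isGap_middle, by norm_num, h1, h2⟩

lemma IsGap.notMem {a b x : ℝ} (h : IsGap a b) (hx : x ∈ Ioo a b) : x ∉ cantorSet := by
  intro hxC
  rcases h.2.2.2 x hxC with h' | h'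
  · exact absurd hx.1 (not_lt.2 h')
  · exact absurd hx.2 (not_lt.2 h')

lemma IsGap.Ioo_subset {a b : ℝ} (h : IsGap a b) : Ioo a b ⊆ Icc 0 1 := fun _ hx =>
  ⟨(cantorSet_subset_unitInterval h.1).1.trans hx.1.le,
    hx.2.le.trans (cantorSet_subset_unitInterval h.2.1).2⟩

lemma IsGap.connectedComponentIn_eq {a b x : ℝ} (h : IsGap a b) (hx : x ∈ Ioo a b) :
    connectedComponentIn (Icc (0 : ℝ) 1 \ cantorC) x = Ioo a b := by
  rw [cantorC_eq_s10]
  have hsub : Ioo a b ⊆ Icc (0 : ℝ) 1 \ cantorSet := fun y hy => ⟨h.Ioo_subset hy, h.notMem hy⟩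
  refine Subset.antisymm (fun y hy => ?_) (isPreconnected_Ioo.subset_connectedComponentIn hx hsub)
  have hoc := (isPreconnected_connectedComponentIn
    (F := Icc (0 : ℝ) 1 \ cantorSet) (x := x)).ordConnected
  have hxx := mem_connectedComponentIn (hsub hx)
  constructor
  · by_contra! hya
    exact (connectedComponentIn_subset _ _ (hoc.out hy hxx ⟨hya, hx.1.le⟩)).2 h.1
  · by_contra! hby
    exact (connectedComponentIn_subset _ _ (hoc.out hxx hy ⟨hx.2.le, hby⟩)).2 h.2.1

lemma mem_removedComponents_iff {S : Set ℝ} :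
    S ∈ removedComponents ↔ ∃ a b, IsGap a b ∧ S = Ioo a b := by
  constructor
  · rintro ⟨x, ⟨hx, hxC⟩, rfl⟩
    obtain ⟨k, a, b, -, hg, -, hxab⟩ := exists_gap hx (by rwa [← cantorC_eq_s10])
    exact ⟨a, b, hg, hg.connectedComponentIn_eq hxab⟩
  · rintro ⟨a, b, hg, rfl⟩
    obtain ⟨x, hx⟩ := nonempty_Ioo.2 hg.2.2.1
    exact ⟨x, ⟨hg.Ioo_subset hx, by rw [cantorC_eq_s10]; exact hg.notMem hx⟩,
      (hg.connectedComponentIn_eq hx).symm⟩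

lemma IsGap.unique {a b a' b' x : ℝ} (h : IsGap a b) (h' : IsGap a' b') (hx : x ∈ Ioo a b)
    (hx' : x ∈ Ioo a' b') : a = a' ∧ b = b' := by
  obtain ⟨hx1, hx2⟩ := hx
  obtain ⟨hx1', hx2'⟩ := hx'
  constructor <;> apply le_antisymm
  · rcases h'.2.2.2 a h.1 with H | H <;> linarith
  · rcases h.2.2.2 a' h'.1 with H | H <;> linarith
  · rcases h.2.2.2 b' h'.2.1 with H | H <;> linarith
  · rcases h'.2.2.2 b h.2.1 with H | H <;> linarith

lemma Ioo_inj_of_lt {a b a' b' : ℝ} (h : a < b) (he : Ioo a b = Ioo a' b') :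
    a = a' ∧ b = b' := by
  have h' : a' < b' := by rw [← nonempty_Ioo, ← he, nonempty_Ioo]; exact h
  have hc := congrArg closure he
  rw [closure_Ioo h.ne, closure_Ioo h'.ne] at hc
  exact ⟨by rw [← csInf_Icc h.le, hc, csInf_Icc h'.le],
    by rw [← csSup_Icc h.le, hc, csSup_Icc h'.le]⟩

lemma mem_cantorE_iff {x : ℝ} : x ∈ cantorE ↔ ∃ a b, IsGap a b ∧ (x = a ∨ x = b) := by
  constructor
  · rintro ⟨S, hS, a, b, rfl, hx⟩
    obtain ⟨a', b', hg, he⟩ := mem_removedComponents_iff.1 hS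
    obtain ⟨rfl, rfl⟩ := Ioo_inj_of_lt hg.2.2.1 he.symm
    exact ⟨_, _, hg, hx⟩
  · rintro ⟨a, b, hg, hx⟩
    exact ⟨_, mem_removedComponents_iff.2 ⟨a, b, hg, rfl⟩, a, b, rfl, hx⟩

/-- Every `e ∈ C` lies in a triadic interval of length `3⁻ⁿ` in which the gaps of `C` reappear,
rescaled, as gaps of `C`. -/
lemma exists_copy (n : ℕ) {e : ℝ} (he : e ∈ cantorSet) :
    ∃ s, s ≤ e ∧ e ≤ s + 1 / 3 ^ n ∧
      ∀ a b, IsGap a b → IsGap (s + a / 3 ^ n) (s + b / 3 ^ n) := by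
  induction n generalizing e with
  | zero =>
    have := cantorSet_subset_unitInterval he
    exact ⟨0, this.1, by simpa using this.2, fun a b h => by simpa using h⟩
  | succ n ih =>
    obtain ⟨z, hz, rfl | rfl⟩ := mem_cantorSet_cases he
    · obtain ⟨s, h1, h2, h3⟩ := ih hz
      refine ⟨s / 3, by linarith, ?_, fun a b h => ?_⟩
      · rw [pow_succ, ← div_div]; linarith
      · rw [pow_succ, ← div_div, ← div_div, ← add_div, ← add_div]
        exact (h3 a b h).div_three
    · obtain ⟨s, h1, h2, h3⟩ := ih hz
      refine ⟨(2 + s) / 3, by linarith, ?_, fun a b h => ?_⟩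
      · rw [pow_succ, ← div_div]; linarith
      · rw [pow_succ, ← div_div, ← div_div, ← add_div, ← add_div, add_assoc, add_assoc]
        exact (h3 a b h).two_add_div_three

lemma isGap_pow (j : ℕ) : IsGap (1 / 3 ^ (j + 1)) (2 / 3 ^ (j + 1)) := by
  induction j with
  | zero => simpa using isGap_middle
  | succ j ih => simpa only [pow_succ _ (j + 1), ← div_div] using ih.div_three

/-- Between two points of `C` that do not bound a common gap there is a decreasing sequence of
points lying in gaps whose lengths run through consecutive powers of `1/3`. -/
lemma exists_gap_sequence {c d : ℝ} (hc : c ∈ cantorSet) (hd : d ∈ cantorSet) (hcd : c < d)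
    (hng : ¬ IsGap c d) :
    ∃ (n : ℕ) (x : ℕ → ℝ), Antitone x ∧ ∀ j, x j ∈ Icc c d ∧
      ∃ a b, IsGap a b ∧ b - a = 1 / 3 ^ (n + j + 1) ∧ x j ∈ Ioo a b := by
  obtain ⟨e, he, hce, hed⟩ : ∃ e ∈ cantorSet, c < e ∧ e < d := by
    by_contra! h
    exact hng ⟨hc, hd, hcd, fun y hy => by
      by_contra! h'
      exact absurd (h y hy h'.1) (not_le.2 h'.2)⟩
  obtain ⟨n, hn⟩ : ∃ n : ℕ, (1 / 3 : ℝ) ^ n < min (e - c) (d - e) :=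
    exists_pow_lt_of_lt_one (lt_min (by linarith) (by linarith)) (by norm_num)
  rw [one_div_pow, lt_min_iff] at hn
  obtain ⟨s, hs1, hs2, hs⟩ := exists_copy n he
  have hpn : (0 : ℝ) < 3 ^ n := by positivity
  have hp : ∀ j : ℕ, (0 : ℝ) < 1 / 3 ^ (n + j + 1) := fun j => by positivity
  have hple : ∀ j : ℕ, (3 : ℝ) * (1 / 3 ^ (n + j + 1)) ≤ 1 / 3 ^ n := fun j => by
    have h1 : (1 : ℝ) / 3 ^ (n + j + 1) = 1 / 3 ^ n * (1 / 3 ^ j) / 3 := by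
      rw [pow_succ, pow_add]; field_simp
    have h2 : (1 : ℝ) / 3 ^ j ≤ 1 := by
      rw [div_le_one (by positivity)]; exact one_le_pow₀ (by norm_num)
    rw [h1]
    have h3 : (0 : ℝ) < 1 / 3 ^ n := by positivity
    nlinarith
  refine ⟨n, fun j => s + 3 / 2 * (1 / 3 ^ (n + j + 1)), ?_, fun j => ⟨⟨?_, ?_⟩, _, _,
    hs _ _ (isGap_pow j), ?_, ?_, ?_⟩⟩
  · intro i j hij
    have : (1 : ℝ) / 3 ^ (n + j + 1) ≤ 1 / 3 ^ (n + i + 1) :=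
      one_div_le_one_div_of_le (by positivity)
        (pow_le_pow_right₀ (by norm_num) (by omega))
    dsimp only
    linarith
  · dsimp only
    linarith [hp j]
  · dsimp only
    linarith [hp j, hple j]
  all_goals
    have h1 : (1 : ℝ) / 3 ^ (j + 1) / 3 ^ n = 1 / 3 ^ (n + j + 1) := by
      rw [div_div, ← pow_add]; congr 2; omega
    have h2 : (2 : ℝ) / 3 ^ (j + 1) / 3 ^ n = 2 * (1 / 3 ^ (n + j + 1)) := by
      rw [← h1]; ring
    simp only [h1, h2]
    linarith [hp j]

/-! ### The space over a gap -/

/-- The height of the bar of `K` over a gap of length `3⁻ᵏ`. -/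
noncomputable def barHeight (k : ℕ) : ℝ := if Even k then 0 else 1

lemma barHeight_mem (k : ℕ) : barHeight k ∈ Icc (0 : ℝ) 1 := by
  unfold barHeight
  split_ifs <;> simp

lemma abs_barHeight_succ_sub (k : ℕ) : |barHeight (k + 1) - barHeight k| = 1 := by
  unfold barHeight
  by_cases h : Even k <;> simp [Nat.even_add_one, h]

lemma mem_cantorKodd_iff {x : ℝ} : x ∈ cantorKodd ↔
    ∃ k a b, 1 ≤ k ∧ Odd k ∧ IsGap a b ∧ b - a = (1 : ℝ) / 3 ^ k ∧ x ∈ Ioo a b := by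
  simp only [cantorKodd, mem_iUnion, cantorCk]
  constructor
  · rintro ⟨k, ⟨hk, ho⟩, S, ⟨hS, a, b, rfl, hl⟩, hx⟩
    obtain ⟨a', b', hg, he⟩ := mem_removedComponents_iff.1 hS
    obtain ⟨rfl, rfl⟩ := Ioo_inj_of_lt hg.2.2.1 he.symm
    exact ⟨k, _, _, hk, ho, hg, hl, hx⟩
  · rintro ⟨k, a, b, hk, ho, hg, hl, hx⟩
    exact ⟨k, ⟨hk, ho⟩, _, ⟨mem_removedComponents_iff.2 ⟨a, b, hg, rfl⟩, a, b, rfl, hl⟩, hx⟩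

lemma mem_cantorKeven_iff {x : ℝ} : x ∈ cantorKeven ↔
    ∃ k a b, 1 ≤ k ∧ Even k ∧ IsGap a b ∧ b - a = (1 : ℝ) / 3 ^ k ∧ x ∈ Ioo a b := by
  simp only [cantorKeven, mem_iUnion, cantorCk]
  constructor
  · rintro ⟨k, ⟨hk, ho⟩, S, ⟨hS, a, b, rfl, hl⟩, hx⟩
    obtain ⟨a', b', hg, he⟩ := mem_removedComponents_iff.1 hS
    obtain ⟨rfl, rfl⟩ := Ioo_inj_of_lt hg.2.2.1 he.symm
    exact ⟨k, _, _, hk, ho, hg, hl, hx⟩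
  · rintro ⟨k, a, b, hk, ho, hg, hl, hx⟩
    exact ⟨k, ⟨hk, ho⟩, _, ⟨mem_removedComponents_iff.2 ⟨a, b, hg, rfl⟩, a, b, rfl, hl⟩, hx⟩

lemma mem_spaceK_iff {x y : ℝ} : (x, y) ∈ spaceK ↔
    (x ∈ cantorSet ∧ y ∈ Icc (0 : ℝ) 1) ∨ (x ∈ cantorKeven ∧ y = 0) ∨
      (x ∈ cantorKodd ∧ y = 1) := by
  simp [spaceK, cantorC_eq_s10, or_assoc]

lemma mem_spaceK_iff_of_gap {k : ℕ} {a b x y : ℝ} (hk : 1 ≤ k) (hg : IsGap a b)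
    (hl : b - a = 1 / 3 ^ k) (hx : x ∈ Ioo a b) : (x, y) ∈ spaceK ↔ y = barHeight k := by
  have huniq : ∀ k' a' b', IsGap a' b' → b' - a' = (1 : ℝ) / 3 ^ k' → x ∈ Ioo a' b' →
      k' = k := by
    intro k' a' b' hg' hl' hx'
    obtain ⟨rfl, rfl⟩ := hg.unique hg' hx hx'
    rw [hl, one_div, one_div, inv_inj] at hl'
    exact (pow_right_injective₀ (by norm_num : (0 : ℝ) < 3) (by norm_num) hl').symm
  rw [mem_spaceK_iff, barHeight, mem_cantorKeven_iff, mem_cantorKodd_iff]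
  constructor
  · rintro (⟨hxC, -⟩ | ⟨⟨k', a', b', -, hp, hg', hl', hx'⟩, rfl⟩ |
      ⟨⟨k', a', b', -, hp, hg', hl', hx'⟩, rfl⟩)
    · exact absurd hxC (hg.notMem hx)
    · obtain rfl := huniq _ _ _ hg' hl' hx'
      rw [if_pos hp]
    · obtain rfl := huniq _ _ _ hg' hl' hx'
      rw [if_neg (Nat.not_even_iff_odd.2 hp)]
  · rintro rfl
    right
    split_ifs with hp
    · exact Or.inl ⟨⟨k, a, b, hk, hp, hg, hl, hx⟩, rfl⟩
    · exact Or.inr ⟨⟨k, a, b, hk, Nat.not_even_iff_odd.1 hp, hg, hl, hx⟩, rfl⟩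

lemma mem_spaceK_of_mem_cantorSet {x y : ℝ} (hx : x ∈ cantorSet) (hy : y ∈ Icc (0 : ℝ) 1) :
    (x, y) ∈ spaceK := mem_spaceK_iff.2 (Or.inl ⟨hx, hy⟩)

lemma snd_mem_of_mem_spaceK {x y : ℝ} (h : (x, y) ∈ spaceK) : y ∈ Icc (0 : ℝ) 1 := by
  rcases mem_spaceK_iff.1 h with ⟨-, h⟩ | ⟨-, rfl⟩ | ⟨-, rfl⟩
  · exact h
  · simp
  · simp

lemma exists_gap_of_mem_spaceK {x y : ℝ} (h : (x, y) ∈ spaceK) (hx : x ∉ cantorSet) :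
    ∃ k a b, 1 ≤ k ∧ IsGap a b ∧ b - a = (1 : ℝ) / 3 ^ k ∧ x ∈ Ioo a b := by
  rcases mem_spaceK_iff.1 h with ⟨h, -⟩ | ⟨h, -⟩ | ⟨h, -⟩
  · exact absurd h hx
  · obtain ⟨k, a, b, hk, -, h⟩ := mem_cantorKeven_iff.1 h
    exact ⟨k, a, b, hk, h⟩
  · obtain ⟨k, a, b, hk, -, h⟩ := mem_cantorKodd_iff.1 h
    exact ⟨k, a, b, hk, h⟩

lemma IsGap.exists_length {a b : ℝ} (hg : IsGap a b) :
    ∃ k, 1 ≤ k ∧ b - a = (1 : ℝ) / 3 ^ k := by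
  obtain ⟨x, hx⟩ := nonempty_Ioo.2 hg.2.2.1
  obtain ⟨k, a', b', hk, hg', hl, hx'⟩ := exists_gap (hg.Ioo_subset hx) (hg.notMem hx)
  obtain ⟨rfl, rfl⟩ := hg.unique hg' hx hx'
  exact ⟨k, hk, hl⟩

/-! ### Points of `K` that are joined -/

lemma joinedIn_of_convex {T : Set (ℝ × ℝ)} (hT : Convex ℝ T) (hTK : T ⊆ spaceK) {u v : ℝ × ℝ}
    (hu : u ∈ T) (hv : v ∈ T) : JoinedIn spaceK u v :=
  ((hT.isPathConnected ⟨u, hu⟩).joinedIn u hu v hv).mono hTK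

lemma joinedIn_vertical_s10 {c y y' : ℝ} (hc : c ∈ cantorSet) (hy : y ∈ Icc (0 : ℝ) 1)
    (hy' : y' ∈ Icc (0 : ℝ) 1) : JoinedIn spaceK (c, y) (c, y') := by
  refine joinedIn_of_convex (T := {c} ×ˢ Icc (0 : ℝ) 1)
    ((convex_singleton c).prod (convex_Icc 0 1)) ?_ ⟨rfl, hy⟩ ⟨rfl, hy'⟩
  rintro ⟨x, z⟩ ⟨rfl, hz⟩
  exact mem_spaceK_of_mem_cantorSet hc hz

/-- Every point of `K` over a closed gap is joined to the left end of the bar over that gap. -/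
lemma joinedIn_bar {k : ℕ} {a b x y : ℝ} (hk : 1 ≤ k) (hg : IsGap a b)
    (hl : b - a = 1 / 3 ^ k) (hx : x ∈ Icc a b) (hxy : (x, y) ∈ spaceK) :
    JoinedIn spaceK (x, y) (a, barHeight k) := by
  have hbar : Icc a b ×ˢ {barHeight k} ⊆ spaceK := by
    rintro ⟨z, w⟩ ⟨hz, hw⟩
    obtain rfl : w = barHeight k := hw
    rcases eq_or_lt_of_le hz.1 with h | h
    · exact mem_spaceK_of_mem_cantorSet (show z ∈ cantorSet from (show a = z from h) ▸ hg.1)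
        (barHeight_mem k)
    rcases eq_or_lt_of_le hz.2 with h' | h'
    · exact mem_spaceK_of_mem_cantorSet (show z ∈ cantorSet from (show z = b from h') ▸ hg.2.1)
        (barHeight_mem k)
    · exact (mem_spaceK_iff_of_gap hk hg hl ⟨h, h'⟩).2 rfl
  have hleft : JoinedIn spaceK (x, barHeight k) (a, barHeight k) :=
    joinedIn_of_convex ((convex_Icc a b).prod (convex_singleton _)) hbar ⟨hx, rfl⟩
      ⟨left_mem_Icc.2 hg.2.2.1.le, rfl⟩
  by_cases hxC : x ∈ cantorSet
  · exact (joinedIn_vertical_s10 hxC (snd_mem_of_mem_spaceK hxy) (barHeight_mem k)).trans hleft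
  · have hxI : x ∈ Ioo a b :=
      ⟨lt_of_le_of_ne hx.1 (fun h => hxC (h ▸ hg.1)),
        lt_of_le_of_ne hx.2 (fun h => hxC (h ▸ hg.2.1))⟩
    rwa [(mem_spaceK_iff_of_gap hk hg hl hxI).1 hxy]

lemma IsGap.joinedIn {a b : ℝ} (hg : IsGap a b) {u v : ℝ × ℝ} (hu : u ∈ spaceK)
    (hv : v ∈ spaceK) (hua : u.1 ∈ Icc a b) (hva : v.1 ∈ Icc a b) : JoinedIn spaceK u v := by
  obtain ⟨k, hk, hl⟩ := hg.exists_length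
  exact (joinedIn_bar hk hg hl hua hu).trans (joinedIn_bar hk hg hl hva hv).symm

/-! ### Points of `K` that are not joined -/

/-- A path in `K` cannot cross infinitely many gaps whose bars alternate between heights `0` and
`1`, because the first crossing times accumulate. -/
lemma not_joined {u v : ℝ × ℝ} (hu : u.1 ∈ cantorSet) (hv : v.1 ∈ cantorSet) (huv : u.1 < v.1)
    (hng : ¬ IsGap u.1 v.1) : ¬ JoinedIn spaceK u v := by
  rintro hJ
  obtain ⟨γ, hγ⟩ := hJ.symm
  obtain ⟨n, x, hanti, hx⟩ := exists_gap_sequence hu hv huv hng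
  have hf : Continuous fun t => (γ t).1 := by fun_prop
  let T : ℕ → Set unitInterval := fun j => {t | (γ t).1 ≤ x j}
  have hTclosed : ∀ j, IsClosed (T j) := fun j => isClosed_le hf continuous_const
  have hTne : ∀ j, (T j).Nonempty := fun j => ⟨1, by
    simp only [T, mem_ofPred_eq, γ.target]; exact (hx j).1.1⟩
  let t : ℕ → unitInterval := fun j => sInf (T j)
  have htT : ∀ j, t j ∈ T j := fun j => (hTclosed j).csInf_mem (hTne j) (OrderBot.bddBelow _)
  have ht : ∀ j, (γ (t j)).1 = x j := by
    intro j
    obtain ⟨s, hs, hsx⟩ := intermediate_value_Icc' (show (0 : unitInterval) ≤ t j from bot_le)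
      hf.continuousOn ⟨htT j, by rw [γ.source]; exact (hx j).1.2⟩
    have : t j ≤ s := csInf_le (OrderBot.bddBelow _) (le_of_eq hsx)
    rw [le_antisymm this hs.2]
    exact hsx
  have hmono : Monotone t := fun i j hij =>
    csInf_le_csInf (OrderBot.bddBelow _) (hTne j) fun r hr => le_trans hr (hanti hij)
  have hlim := tendsto_atTop_ciSup hmono (OrderTop.bddAbove _)
  have hheight : ∀ j, (γ (t j)).2 = barHeight (n + j + 1) := by
    intro j
    obtain ⟨a, b, hg, hl, hxab⟩ := (hx j).2
    refine (mem_spaceK_iff_of_gap (by omega) hg hl hxab).1 ?_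
    rw [← ht j]
    exact hγ (t j)
  have hg : Continuous fun t => (γ t).2 := by fun_prop
  have hlim2 := (hg.tendsto _).comp hlim
  have hdiff := ((hlim2.comp (tendsto_add_atTop_nat 1)).sub hlim2).abs
  have hconst : (fun j => |((fun t => (γ t).2) ∘ t ∘ fun a => a + 1) j -
      ((fun t => (γ t).2) ∘ t) j|) = fun _ => (1 : ℝ) := by
    ext j
    simp only [Function.comp, hheight]
    exact abs_barHeight_succ_sub (n + j + 1)
  have h01 : Tendsto (fun _ : ℕ => (1 : ℝ)) atTop (𝓝 |(0 : ℝ)|) := by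
    rw [← hconst, ← sub_self]
    exact hdiff
  have := tendsto_nhds_unique h01 tendsto_const_nhds
  simp at this

lemma eq_or_isGap_of_joinedIn {u v : ℝ × ℝ} (hu : u.1 ∈ cantorSet) (hv : v.1 ∈ cantorSet)
    (hJ : JoinedIn spaceK u v) : u.1 = v.1 ∨ IsGap u.1 v.1 ∨ IsGap v.1 u.1 := by
  rcases lt_trichotomy u.1 v.1 with h | h | h
  · right; left
    by_contra hn
    exact not_joined hu hv h hn hJ
  · exact Or.inl h
  · right; right
    by_contra hn
    exact not_joined hv hu h hn hJ.symm

/-! ### The path components -/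

/-- A point of `C` that is no endpoint of a gap carries only its own vertical segment. -/
lemma joinedIn_iff_of_notMem_cantorE {u v : ℝ × ℝ} (huK : u ∈ spaceK) (hvK : v ∈ spaceK)
    (hu : u.1 ∈ cantorSet) (huE : u.1 ∉ cantorE) : JoinedIn spaceK u v ↔ v.1 = u.1 := by
  have key : ∀ w : ℝ × ℝ, w.1 ∈ cantorSet → JoinedIn spaceK u w → u.1 = w.1 := by
    intro w hw hJ
    rcases eq_or_isGap_of_joinedIn hu hw hJ with h | h | h
    · exact h
    · exact absurd (mem_cantorE_iff.2 ⟨_, _, h, Or.inl rfl⟩) huE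
    · exact absurd (mem_cantorE_iff.2 ⟨_, _, h, Or.inr rfl⟩) huE
  constructor
  · intro hJ
    by_cases hv : v.1 ∈ cantorSet
    · exact (key v hv hJ).symm
    · obtain ⟨k, a, b, -, hg, -, hvab⟩ := exists_gap_of_mem_spaceK (y := v.2) hvK hv
      have hvI := Ioo_subset_Icc_self hvab
      have h0 : (a, (0 : ℝ)) ∈ spaceK := mem_spaceK_of_mem_cantorSet hg.1 (by simp)
      have := key (a, 0) hg.1 (hJ.trans (hg.joinedIn hvK h0 hvI (left_mem_Icc.2 hg.2.2.1.le)))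
      exact absurd (mem_cantorE_iff.2 ⟨_, _, hg, Or.inl this⟩) huE
  · intro h
    obtain ⟨x, y⟩ := u
    obtain ⟨x', y'⟩ := v
    obtain rfl : x' = x := h
    exact joinedIn_vertical_s10 hu (snd_mem_of_mem_spaceK huK) (snd_mem_of_mem_spaceK hvK)

lemma IsGap.joinedIn_iff {a b : ℝ} (hg : IsGap a b) {u v : ℝ × ℝ} (huK : u ∈ spaceK)
    (hvK : v ∈ spaceK) (hu : u.1 ∈ Icc a b) : JoinedIn spaceK u v ↔ v.1 ∈ Icc a b := by
  refine ⟨fun hJ => ?_, fun hv => hg.joinedIn huK hvK hu hv⟩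
  have hab := hg.2.2.1
  have ha0 : (a, (0 : ℝ)) ∈ spaceK := mem_spaceK_of_mem_cantorSet hg.1 (by simp)
  have hb0 : (b, (0 : ℝ)) ∈ spaceK := mem_spaceK_of_mem_cantorSet hg.2.1 (by simp)
  have hJa := hg.joinedIn ha0 huK (left_mem_Icc.2 hab.le) hu
  have hJb := hg.joinedIn hb0 huK (right_mem_Icc.2 hab.le) hu
  -- A point of `C` left of `a` would span a gap with `b`, which contains `a`; dually for `b`.
  have key : ∀ w : ℝ × ℝ, w.1 ∈ cantorSet → JoinedIn spaceK u w → w.1 ∈ Icc a b := by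
    intro w hw hJw
    constructor
    · by_contra! hlt
      rcases eq_or_isGap_of_joinedIn hg.2.1 hw (hJb.trans hJw) with h | h | h
      · dsimp only at h; linarith
      · have := h.2.2.1; dsimp only at this; linarith
      · exact h.notMem ⟨hlt, hab⟩ hg.1
    · by_contra! hlt
      rcases eq_or_isGap_of_joinedIn hg.1 hw (hJa.trans hJw) with h | h | h
      · dsimp only at h; linarith
      · exact h.notMem ⟨hab, hlt⟩ hg.2.1
      · have := h.2.2.1; dsimp only at this; linarith
  by_cases hv : v.1 ∈ cantorSet
  · exact key v hv hJ
  · obtain ⟨k, a', b', -, hg', -, hvab⟩ := exists_gap_of_mem_spaceK (y := v.2) hvK hv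
    have hvI := Ioo_subset_Icc_self hvab
    have hle := hg'.2.2.1.le
    have ha := key (a', 0) hg'.1 (hJ.trans (hg'.joinedIn hvK
      (mem_spaceK_of_mem_cantorSet hg'.1 (by simp)) hvI (left_mem_Icc.2 hle)))
    have hb := key (b', 0) hg'.2.1 (hJ.trans (hg'.joinedIn hvK
      (mem_spaceK_of_mem_cantorSet hg'.2.1 (by simp)) hvI (right_mem_Icc.2 hle)))
    exact ⟨ha.1.trans hvI.1, hvI.2.trans hb.2⟩

lemma mem_pathComponent_iff_joinedIn (p q : spaceK) :
    q ∈ pathComponent p ↔ JoinedIn spaceK (p : ℝ × ℝ) q := by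
  rw [joinedIn_iff_joined p.2 q.2]
  exact Iff.rfl

lemma pathComponent_eq_of_notMem_cantorE (p : spaceK) (hp : (p : ℝ × ℝ).1 ∈ cantorSet)
    (hpE : (p : ℝ × ℝ).1 ∉ cantorE) :
    pathComponent p = {q : spaceK | (q : ℝ × ℝ).1 = (p : ℝ × ℝ).1} := by
  ext q
  rw [mem_pathComponent_iff_joinedIn]
  exact joinedIn_iff_of_notMem_cantorE p.2 q.2 hp hpE

lemma IsGap.pathComponent_eq {a b : ℝ} (hg : IsGap a b) (p : spaceK)
    (hp : (p : ℝ × ℝ).1 ∈ Icc a b) :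
    pathComponent p = {q : spaceK | (q : ℝ × ℝ).1 ∈ closure (Ioo a b)} := by
  ext q
  rw [mem_pathComponent_iff_joinedIn, closure_Ioo hg.2.2.1.ne]
  exact hg.joinedIn_iff p.2 q.2 hp

/-- The path components of `K` are exactly the vertical segments `{c} × [0,1]` for `c ∈ C`
not an endpoint of a removed interval, together with the sets `π⁻¹(closure I)` for removed
intervals `I` (where `π : K → [0,1]` is the first-coordinate projection); equivalently, no
path in `K` can join points lying over two distinct points of `C` not spanned by the closure
of a single removed interval. -/
theorem pathComponents_spaceK :
    {S : Set spaceK | ∃ p : spaceK, S = pathComponent p} =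
      {S : Set spaceK | ∃ c ∈ cantorC \ cantorE, S = {p : spaceK | (p : ℝ × ℝ).1 = c}} ∪
      {S : Set spaceK | ∃ I ∈ removedComponents,
        S = {p : spaceK | (p : ℝ × ℝ).1 ∈ closure I}} := by
  ext S
  constructor
  · rintro ⟨p, rfl⟩
    by_cases hp : (p : ℝ × ℝ).1 ∈ cantorSet
    · by_cases hpE : (p : ℝ × ℝ).1 ∈ cantorE
      · obtain ⟨a, b, hg, hab⟩ := mem_cantorE_iff.1 hpE
        refine Or.inr ⟨_, mem_removedComponents_iff.2 ⟨a, b, hg, rfl⟩, hg.pathComponent_eq p ?_⟩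
        rcases hab with h | h <;> rw [h]
        · exact left_mem_Icc.2 hg.2.2.1.le
        · exact right_mem_Icc.2 hg.2.2.1.le
      · exact Or.inl ⟨_, ⟨by rwa [cantorC_eq_s10], hpE⟩, pathComponent_eq_of_notMem_cantorE p hp hpE⟩
    · obtain ⟨k, a, b, -, hg, -, hpab⟩ := exists_gap_of_mem_spaceK (y := (p : ℝ × ℝ).2) p.2 hp
      exact Or.inr ⟨_, mem_removedComponents_iff.2 ⟨a, b, hg, rfl⟩,
        hg.pathComponent_eq p (Ioo_subset_Icc_self hpab)⟩
  · rintro (⟨c, ⟨hc, hcE⟩, rfl⟩ | ⟨I, hI, rfl⟩)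
    · rw [cantorC_eq_s10] at hc
      let p : spaceK := ⟨(c, 0), mem_spaceK_of_mem_cantorSet hc (by simp)⟩
      exact ⟨p, (pathComponent_eq_of_notMem_cantorE p hc hcE).symm⟩
    · obtain ⟨a, b, hg, rfl⟩ := mem_removedComponents_iff.1 hI
      exact ⟨⟨(a, 0), mem_spaceK_of_mem_cantorSet hg.1 (by simp)⟩,
        (hg.pathComponent_eq _ (left_mem_Icc.2 hg.2.2.1.le)).symm⟩
end
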